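/- 𝐹̃ is a unital subalgebra of the fusion algebra ℱ: it contains the class of the empty word and is closed under the product of ℱ. -/

import Mathlib

inductive Brk : Type
  | lt  -- ⟨
  | gt  -- ⟩
deriving DecidableEq

/-- finite sequences of pairs of positive integers -/
abbrev PSeq := List (ℕ+ × ℕ+)

/-- the alphabet 𝒜: red letters `a_{•γ}` and blue letters `a_{γ◇}` -/
inductive FLetter : Type
  | red (b : Brk) (γ : PSeq)
  | blue (γ : PSeq) (d : Brk)
deriving DecidableEq

/-- the free associative algebra ℂ⟨𝒜⟩ -/
abbrev FreeA := FreeAlgebra ℂ FLetter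

noncomputable def ιA (e : FLetter) : FreeA := FreeAlgebra.ι ℂ e

noncomputable def wordProd (l : List FLetter) : FreeA := (l.map ιA).prod

/-- the letters of `𝒜_{⟨ ⟩}` -/
def IsCentral : FLetter → Prop
  | .red .lt _ => True
  | .blue _ .gt => True
  | _ => False

/-- the generating relations of the ideal 𝒥_F -/
inductive FRel : FreeA → FreeA → Prop
  | central (e f : FLetter) (he : IsCentral e) :
      FRel (ιA e * ιA f) (ιA f * ιA e)
  | red_comm (b b' : Brk) (γ γ' : PSeq) :
      FRel (ιA (.red b γ) * ιA (.red b' γ')) (ιA (.red b' γ') * ιA (.red b γ))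
  | blue_comm (d d' : Brk) (γ γ' : PSeq) :
      FRel (ιA (.blue γ d) * ιA (.blue γ' d')) (ιA (.blue γ' d') * ιA (.blue γ d))
  | fusion (b d : Brk) (α β : PSeq) (v x : List FLetter) :
      FRel (ιA (.red b α) * wordProd v * ιA (.blue α .lt) * ιA (.red .gt β) *
              wordProd x * ιA (.blue β d))
           (ιA (.red b α) * wordProd v * ιA (.red .gt β) * ιA (.blue α .lt) *
              wordProd x * ιA (.blue β d)
             + ιA (.red b (α ++ β)) * wordProd v * wordProd x * ιA (.blue (α ++ β) d))

/-- the fusion algebra ℱ = ℂ⟨𝒜⟩/𝒥_F -/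
abbrev FA := RingQuot FRel

noncomputable def mkF : FreeA →ₐ[ℂ] FA := RingQuot.mkAlgHom ℂ FRel

/-- the red letter `a_{•γ}` in ℱ -/
noncomputable def Rl (b : Brk) (γ : PSeq) : FA := mkF (ιA (.red b γ))

/-- the blue letter `a_{γ◇}` in ℱ -/
noncomputable def Bll (γ : PSeq) (d : Brk) : FA := mkF (ιA (.blue γ d))

/-- the subspace 𝐹̃ of ℱ spanned by the classes of the words
`a_{•₁α₁}⋯a_{•ₖαₖ}·a_{α₁◇₁}⋯a_{αₖ◇ₖ}` -/
noncomputable def Ftilde : Submodule ℂ FA :=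
  Submodule.span ℂ
    {x : FA | ∃ (k : ℕ) (bs ds : Fin k → Brk) (seqs : Fin k → PSeq),
      x = ((List.finRange k).map fun i => Rl (bs i) (seqs i)).prod *
            ((List.finRange k).map fun i => Bll (seqs i) (ds i)).prod}

/-!
`Ftilde` is the smallest subspace that contains `1` and is stable under
`y ↦ a_{•β} * y * a_{β◇}`. By induction along this description it suffices that if right
multiplication by `y` preserves `Ftilde`, then so does right multiplication by
`a_{•β} * y * a_{β◇}`. The letter `a_{⟨β}` is central, so the case `• = ⟨` is immediate. For
`• = ⟩`, the letter `a_{⟩β}` has to travel left through the blue letters of a spanning word. It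
commutes with `a_{α⟩}`, while passing `a_{α⟨}` leaves behind a fusion term, in which `a_{•α}` and
`a_{β◇}` have become the matching outer letters `a_{•αβ}` and `a_{αβ◇}` around an element of
`Ftilde * y`.
-/

namespace FusionAlgebra

theorem mkF_eq_of_FRel {p q : FreeA} (h : FRel p q) : mkF p = mkF q :=
  RingQuot.mkAlgHom_rel ℂ h

theorem mkF_surjective : Function.Surjective mkF :=
  RingQuot.mkAlgHom_surjective ℂ FRel

theorem commute_Rl_Rl (b b' : Brk) (γ γ' : PSeq) : Commute (Rl b γ) (Rl b' γ') := by
  simpa only [Rl, Commute, SemiconjBy, map_mul] using mkF_eq_of_FRel (FRel.red_comm b b' γ γ')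

theorem commute_Bll_Bll (γ γ' : PSeq) (d d' : Brk) : Commute (Bll γ d) (Bll γ' d') := by
  simpa only [Bll, Commute, SemiconjBy, map_mul] using mkF_eq_of_FRel (FRel.blue_comm d d' γ γ')

theorem span_range_wordProd : Submodule.span ℂ (Set.range wordProd) = ⊤ := by
  rw [eq_top_iff, ← Algebra.top_toSubmodule, ← FreeAlgebra.adjoin_range_ι,
    Algebra.adjoin_eq_span, ← FreeMonoid.mrange_lift]
  exact Submodule.span_mono fun _ ⟨l, hl⟩ => ⟨l.toList, (FreeMonoid.lift_apply ..).symm.trans hl⟩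

@[elab_as_elim]
theorem word_induction {p : FA → Prop} (word : ∀ l, p (mkF (wordProd l)))
    (add : ∀ x y, p x → p y → p (x + y)) (smul : ∀ (c : ℂ) x, p x → p (c • x)) (x : FA) :
    p x := by
  obtain ⟨a, rfl⟩ := mkF_surjective x
  have ha : a ∈ Submodule.span ℂ (Set.range wordProd) := by simp [span_range_wordProd]
  induction ha using Submodule.span_induction with
  | mem a ha =>
    obtain ⟨l, rfl⟩ := ha
    exact word l
  | zero => simpa using smul 0 _ (word [])
  | add a a' _ _ ha ha' => simpa using add _ _ ha ha'
  | smul c a _ ha => simpa using smul c _ ha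

theorem commute_of_isCentral {e : FLetter} (he : IsCentral e) (x : FA) :
    Commute (mkF (ιA e)) x := by
  induction x using word_induction with
  | word l =>
    rw [wordProd, map_list_prod, List.map_map]
    refine Commute.list_prod_right _ _ fun y hy => ?_
    obtain ⟨f, -, rfl⟩ := List.mem_map.1 hy
    simpa only [Commute, SemiconjBy, Function.comp_apply, map_mul] using
      mkF_eq_of_FRel (FRel.central e f he)
  | add x y hx hy => exact hx.add_right hy
  | smul c x hx => exact hx.smul_right c

theorem commute_Rl_lt (γ : PSeq) (x : FA) : Commute (Rl .lt γ) x :=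
  commute_of_isCentral (e := .red .lt γ) trivial x

theorem commute_Bll_gt (γ : PSeq) (x : FA) : Commute (Bll γ .gt) x :=
  commute_of_isCentral (e := .blue γ .gt) trivial x

/-- The defining relation has words in place of `v` and `x`; both sides are linear in each. -/
theorem fusion (b d : Brk) (α β : PSeq) (v x : FA) :
    Rl b α * v * Bll α .lt * Rl .gt β * x * Bll β d =
      Rl b α * v * Rl .gt β * Bll α .lt * x * Bll β d +
        Rl b (α ++ β) * v * x * Bll (α ++ β) d := by
  induction v using word_induction with
  | word l =>
    induction x using word_induction with
    | word m =>
      simpa only [Rl, Bll, map_mul, map_add] using mkF_eq_of_FRel (FRel.fusion b d α β l m)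
    | add x y hx hy => simp only [mul_add, add_mul, hx, hy]; abel
    | smul c x hx => simp only [mul_smul_comm, smul_mul_assoc, hx, smul_add]
  | add v w hv hw => simp only [mul_add, add_mul, hv, hw]; abel
  | smul c v hv => simp only [mul_smul_comm, smul_mul_assoc, hv, smul_add]

/-- The data of a red letter `a_{•α}` and a blue letter `a_{α◇}` carrying the same sequence `α`.
A list of these encodes a word `a_{•₁α₁}⋯a_{•ₖαₖ}·a_{α₁◇₁}⋯a_{αₖ◇ₖ}` spanning `Ftilde`. -/
structure LetterPair where
  left : Brk
  seq : PSeq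
  right : Brk

/-- The red half `a_{•₁α₁}⋯a_{•ₖαₖ}` of the word encoded by a list of letter pairs. -/
noncomputable def redProd (L : List LetterPair) : FA :=
  (L.map fun t => Rl t.left t.seq).prod

/-- The blue half `a_{α₁◇₁}⋯a_{αₖ◇ₖ}` of the word encoded by a list of letter pairs. -/
noncomputable def blueProd (L : List LetterPair) : FA :=
  (L.map fun t => Bll t.seq t.right).prod

@[simp] theorem redProd_nil : redProd [] = 1 := rfl

@[simp] theorem blueProd_nil : blueProd [] = 1 := rfl

@[simp] theorem redProd_cons (t : LetterPair) (L : List LetterPair) :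
    redProd (t :: L) = Rl t.left t.seq * redProd L := List.prod_cons

@[simp] theorem blueProd_cons (t : LetterPair) (L : List LetterPair) :
    blueProd (t :: L) = Bll t.seq t.right * blueProd L := List.prod_cons

@[simp] theorem redProd_append (L M : List LetterPair) :
    redProd (L ++ M) = redProd L * redProd M := by
  simp [redProd]

@[simp] theorem blueProd_append (L M : List LetterPair) :
    blueProd (L ++ M) = blueProd L * blueProd M := by
  simp [blueProd]

theorem commute_Rl_redProd (b : Brk) (γ : PSeq) (L : List LetterPair) :
    Commute (Rl b γ) (redProd L) := by
  refine Commute.list_prod_right _ _ fun x hx => ?_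
  obtain ⟨t, -, rfl⟩ := List.mem_map.1 hx
  exact commute_Rl_Rl ..

theorem commute_Bll_blueProd (γ : PSeq) (d : Brk) (L : List LetterPair) :
    Commute (Bll γ d) (blueProd L) := by
  refine Commute.list_prod_right _ _ fun x hx => ?_
  obtain ⟨t, -, rfl⟩ := List.mem_map.1 hx
  exact commute_Bll_Bll ..

theorem redProd_cons_mul_blueProd_cons (t : LetterPair) (L : List LetterPair) :
    redProd (t :: L) * blueProd (t :: L) =
      Rl t.left t.seq * (redProd L * blueProd L) * Bll t.seq t.right := by
  rw [redProd_cons, blueProd_cons, (commute_Bll_blueProd ..).eq]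
  simp only [mul_assoc]

theorem redProd_mul_blueProd_mul_Rl_gt (b d : Brk) (α β : PSeq) (L M : List LetterPair) (y : FA) :
    redProd (L ++ [⟨b, α, .lt⟩] ++ M) * blueProd (L ++ [⟨b, α, .lt⟩]) * Rl .gt β * blueProd M *
        y * Bll β d =
      redProd (L ++ ⟨b, α, .lt⟩ :: M) * blueProd L * Rl .gt β * blueProd (⟨b, α, .lt⟩ :: M) *
          y * Bll β d +
        Rl b (α ++ β) * (redProd (L ++ M) * blueProd (L ++ M) * y) * Bll (α ++ β) d := by
  have h := congrArg (redProd L * ·) (fusion b d α β (redProd M * blueProd L) (blueProd M * y))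
  have hcomm := (commute_Rl_redProd b (α ++ β) L).left_comm
  simpa [mul_add, mul_assoc, hcomm] using h

theorem Ftilde_eq_span_range :
    Ftilde = Submodule.span ℂ (Set.range fun L => redProd L * blueProd L) := by
  refine congrArg _ (Set.Subset.antisymm ?_ ?_)
  · rintro _ ⟨k, bs, ds, seqs, rfl⟩
    refine ⟨(List.finRange k).map fun i => ⟨bs i, seqs i, ds i⟩, ?_⟩
    simp only [redProd, blueProd, List.map_map, Function.comp_def]
  · rintro _ ⟨L, rfl⟩
    refine ⟨L.length, fun i => L[i].left, fun i => L[i].right, fun i => L[i].seq, ?_⟩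
    have hL : (List.finRange L.length).map L.get = L := List.map_get_finRange L
    conv_lhs => rw [← hL]
    simp only [redProd, blueProd, List.map_map, Function.comp_def, List.get_eq_getElem,
      Fin.getElem_fin]

theorem redProd_mul_blueProd_mem (L : List LetterPair) : redProd L * blueProd L ∈ Ftilde := by
  rw [Ftilde_eq_span_range]
  exact Submodule.subset_span ⟨L, rfl⟩

theorem one_mem_Ftilde : (1 : FA) ∈ Ftilde := by
  simpa using redProd_mul_blueProd_mem []

theorem Rl_mul_mul_Bll_mem (b d : Brk) (β : PSeq) {x : FA} (hx : x ∈ Ftilde) :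
    Rl b β * x * Bll β d ∈ Ftilde := by
  rw [Ftilde_eq_span_range] at hx
  induction hx using Submodule.span_induction with
  | mem x hx =>
    obtain ⟨L, rfl⟩ := hx
    rw [← redProd_cons_mul_blueProd_cons ⟨b, β, d⟩]
    exact redProd_mul_blueProd_mem _
  | zero => simp
  | add x y _ _ hx hy => simpa only [mul_add, add_mul] using add_mem hx hy
  | smul c x _ hx =>
    simpa only [mul_smul_comm, smul_mul_assoc] using Submodule.smul_mem _ c hx

@[elab_as_elim]
theorem Ftilde_induction {p : ∀ x, x ∈ Ftilde → Prop} (one : p 1 one_mem_Ftilde)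
    (Rl_mul_mul_Bll : ∀ b d β x hx, p x hx →
      p (Rl b β * x * Bll β d) (Rl_mul_mul_Bll_mem b d β hx))
    (add : ∀ x y hx hy, p x hx → p y hy → p (x + y) (add_mem hx hy))
    (smul : ∀ (c : ℂ) x hx, p x hx → p (c • x) (Submodule.smul_mem _ c hx))
    {x : FA} (hx : x ∈ Ftilde) : p x hx := by
  have paired (L : List LetterPair) :
      p (redProd L * blueProd L) (redProd_mul_blueProd_mem L) := by
    induction L with
    | nil => simpa using one
    | cons t L ih =>
      simpa only [redProd_cons_mul_blueProd_cons] using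
        Rl_mul_mul_Bll t.left t.right t.seq _ _ ih
  have hx' := hx
  rw [Ftilde_eq_span_range] at hx'
  induction hx' using Submodule.span_induction with
  | mem x hx' =>
    obtain ⟨L, rfl⟩ := hx'
    exact paired L
  | zero => simpa using smul 0 _ _ one
  | add x y hx' hy' ihx ihy =>
    rw [← Ftilde_eq_span_range] at hx' hy'
    exact add x y hx' hy' (ihx hx') (ihy hy')
  | smul c x hx' ih =>
    rw [← Ftilde_eq_span_range] at hx'
    exact smul c x hx' (ih hx')

/-- `M` collects the blue letters that `a_{⟩β}` has already passed on its way to the left. -/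
theorem redProd_append_mul_blueProd_mul_Rl_gt_mem (β : PSeq) (d : Brk) {y : FA}
    (hy : ∀ x ∈ Ftilde, x * y ∈ Ftilde) (L M : List LetterPair) :
    redProd (L ++ M) * blueProd L * Rl .gt β * blueProd M * y * Bll β d ∈ Ftilde := by
  induction L using List.reverseRecOn generalizing M with
  | nil =>
    have h := Rl_mul_mul_Bll_mem .gt d β (hy _ (redProd_mul_blueProd_mem M))
    simpa [← mul_assoc, (commute_Rl_redProd .gt β M).eq] using h
  | append_singleton L t ih =>
    obtain ⟨b, α, e⟩ := t
    cases e with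
    | gt => simpa [mul_assoc, (commute_Bll_gt α (Rl .gt β)).left_comm] using ih (⟨b, α, .gt⟩ :: M)
    | lt =>
      rw [redProd_mul_blueProd_mul_Rl_gt]
      exact add_mem (ih _) (Rl_mul_mul_Bll_mem _ _ _ (hy _ (redProd_mul_blueProd_mem _)))

theorem mul_Rl_gt_mul_mul_Bll_mem (β : PSeq) (d : Brk) {x y : FA} (hx : x ∈ Ftilde)
    (hy : ∀ x ∈ Ftilde, x * y ∈ Ftilde) : x * (Rl .gt β * y * Bll β d) ∈ Ftilde := by
  rw [Ftilde_eq_span_range] at hx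
  induction hx using Submodule.span_induction with
  | mem x hx =>
    obtain ⟨L, rfl⟩ := hx
    simpa [mul_assoc] using redProd_append_mul_blueProd_mul_Rl_gt_mem β d hy L []
  | zero => simp
  | add x x' _ _ hx hx' => simpa only [add_mul] using add_mem hx hx'
  | smul c x _ hx => simpa only [smul_mul_assoc] using Submodule.smul_mem _ c hx

theorem mul_Rl_lt_mul_mul_Bll_mem (β : PSeq) (d : Brk) {x y : FA} (hxy : x * y ∈ Ftilde) :
    x * (Rl .lt β * y * Bll β d) ∈ Ftilde := by
  simpa only [mul_assoc, (commute_Rl_lt β x).left_comm] using Rl_mul_mul_Bll_mem .lt d β hxy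

end FusionAlgebra

/-- 𝐹̃ is a unital subalgebra of the fusion algebra ℱ. -/
theorem Ftilde_subalgebra :
    (1 : FA) ∈ Ftilde ∧ ∀ x ∈ Ftilde, ∀ y ∈ Ftilde, x * y ∈ Ftilde := by
  refine ⟨FusionAlgebra.one_mem_Ftilde, fun x hx y hy => ?_⟩
  induction hy using FusionAlgebra.Ftilde_induction generalizing x with
  | one => simpa using hx
  | Rl_mul_mul_Bll b d β y _ ih =>
    cases b with
    | lt => exact FusionAlgebra.mul_Rl_lt_mul_mul_Bll_mem β d (ih x hx)
    | gt => exact FusionAlgebra.mul_Rl_gt_mul_mul_Bll_mem β d hx ih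
  | add y y' _ _ ih ih' => simpa only [mul_add] using add_mem (ih x hx) (ih' x hx)
  | smul c y _ ih => simpa only [mul_smul_comm] using Submodule.smul_mem _ c (ih x hx)
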